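/- arXiv:2204.08760 — 12 statements merged into one kernel-verified Lean document; each statement's English description precedes it below -/
import Mathlib

section
/- Let q = p^t be a prime power, n > 2, c ∈ GF(q^n) (with c ≠ 1 if p = 2), u ∈ GF(q^n) nonzero, F : GF(q^n) → GF(q^n) a PcN function with respect to c, and f : GF(q^n) → GF(q). Define H : GF(q^n) → GF(q^n) by H(x) = F(x) + u·f(x). Then H is NOT PcN with respect to c if and only if there exist a ∈ GF(q^n), elements x ≠ y in GF(q^n), and ε = α − c·β ≠ 0 with α, β ∈ GF(q), such that (F(x+a) − c·F(x)) − (F(y+a) − c·F(y)) = −ε·u and (f(x+a) − c·f(x)) − (f(y+a) − c·f(y)) = ε. -/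
open scoped Classical

/-- The number of solutions `x` of `F(x+a) - c·F(x) = b`. -/
noncomputable def cDeltaCount {K : Type*} [Field K] [Fintype K]
    (c : K) (F : K → K) (a b : K) : ℕ :=
  (Finset.univ.filter fun x => F (x + a) - c * F x = b).card

/-- The `c`-differential uniformity: the maximum of `cDeltaCount` over all `a, b`,
where `a ≠ 0` is required when `c = 1`. -/
noncomputable def cDU {K : Type*} [Field K] [Fintype K] (c : K) (F : K → K) : ℕ :=
  (Finset.univ.filter fun ab : K × K => c = 1 → ab.1 ≠ 0).sup
    fun ab => cDeltaCount c F ab.1 ab.2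

/-- `F` is perfect `c`-nonlinear. -/
def IsPcN {K : Type*} [Field K] [Fintype K] (c : K) (F : K → K) : Prop :=
  cDU c F = 1

theorem isPcN_iff_inj {K : Type*} [Field K] [Fintype K] (c : K) (F : K → K) :
    IsPcN c F ↔ ∀ a : K, (c = 1 → a ≠ 0) → ∀ x y : K,
      F (x + a) - c * F x = F (y + a) - c * F y → x = y := by
  unfold IsPcN cDU
  constructor
  · intro h a ha x y hxy
    have h1 : cDeltaCount c F a (F (y + a) - c * F y) ≤ 1 := by
      rw [← h]
      exact Finset.le_sup (f := fun ab : K × K => cDeltaCount c F ab.1 ab.2)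
        (b := (a, F (y + a) - c * F y)) (by simpa using ha)
    unfold cDeltaCount at h1
    rw [Finset.card_le_one] at h1
    exact h1 x (by simpa using hxy) y (by simp)
  · intro h
    apply le_antisymm
    · apply Finset.sup_le
      rintro ⟨a, b⟩ hab
      have ha : c = 1 → a ≠ 0 := by simpa using hab
      show cDeltaCount c F a b ≤ 1
      unfold cDeltaCount
      rw [Finset.card_le_one]
      intro x hx y hy
      have hx' := (Finset.mem_filter.1 hx).2
      have hy' := (Finset.mem_filter.1 hy).2
      exact h a ha x y (hx'.trans hy'.symm)
    · have h2 : 1 ≤ cDeltaCount c F 1 (F (0 + 1) - c * F 0) := by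
        unfold cDeltaCount
        rw [Nat.succ_le_iff, Finset.card_pos]
        exact ⟨0, by simp⟩
      exact h2.trans (Finset.le_sup (f := fun ab : K × K => cDeltaCount c F ab.1 ab.2)
        (b := (1, F (0 + 1) - c * F 0)) (by simp))

theorem statement0 (p t n : ℕ) (hp : p.Prime) (ht : 1 ≤ t) (hn : 2 < n)
    (K : Type*) [Field K] [Fintype K] (hK : Nat.card K = (p ^ t) ^ n)
    (Fq : Subfield K) (hFq : Nat.card Fq = p ^ t)
    (c : K) (hc : p = 2 → c ≠ 1)
    (u : K) (hu : u ≠ 0)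
    (F : K → K) (hF : IsPcN c F)
    (f : K → Fq) :
    ¬ IsPcN c (fun x => F x + u * (f x : K)) ↔
      ∃ (a x y : K) (α β : Fq), x ≠ y ∧ (α : K) - c * (β : K) ≠ 0 ∧
        (F (x + a) - c * F x) - (F (y + a) - c * F y) = -(((α : K) - c * (β : K)) * u) ∧
        ((f (x + a) : K) - c * (f x : K)) - ((f (y + a) : K) - c * (f y : K)) =
          (α : K) - c * (β : K) := by
  rw [isPcN_iff_inj] at hF ⊢
  constructor
  · intro h
    push Not at h
    obtain ⟨a, ha, x, y, hxy, hne⟩ := h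
    have key : F (x + a) - c * F x - (F (y + a) - c * F y) =
        -((((f (x + a) - f (y + a) : Fq) : K) - c * ((f x - f y : Fq) : K)) * u) := by
      push_cast
      linear_combination hxy
    refine ⟨a, x, y, f (x + a) - f (y + a), f x - f y, hne, ?_, key, ?_⟩
    · intro h0
      rw [h0, zero_mul, neg_zero] at key
      exact hne (hF a ha x y (sub_eq_zero.1 key))
    · push_cast
      ring
  · rintro ⟨a, x, y, α, β, hne, h0, h1, h2⟩ h
    refine hne (h a ?_ x y ?_)
    · rintro rfl rfl
      apply h0
      simp only [add_zero, one_mul, sub_self] at h2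
      rw [one_mul]
      exact h2.symm
    · linear_combination h1 + u * h2
end

section
/- Let q = p^t be a prime power, n > 2, c ∈ GF(q^n) (with c ≠ 1 if p = 2), u ∈ GF(q^n) nonzero, F : GF(q^n) → GF(q^n) a PcN function with respect to c, f : GF(q^n) → GF(q), and H(x) = F(x) + u·f(x). Then the c-differential uniformity of H satisfies _cΔ_H ≤ q²; moreover, if c ∈ GF(q), then _cΔ_H ≤ q. -/
open scoped Classical

/-- The derivative of a PcN function is injective. -/
lemma pcn_inj {K : Type*} [Field K] [Fintype K] {c : K} {F : K → K} (hF : IsPcN c F)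
    {a : K} (ha : c = 1 → a ≠ 0) {x y : K}
    (h : F (x + a) - c * F x = F (y + a) - c * F y) : x = y := by
  have h1 : cDeltaCount c F a (F (y + a) - c * F y) ≤ 1 := by
    have h2 : cDU c F = 1 := hF
    rw [← h2]
    exact Finset.le_sup (f := fun ab : K × K => cDeltaCount c F ab.1 ab.2)
      (b := (a, F (y + a) - c * F y)) (by simpa using ha)
  unfold cDeltaCount at h1
  rw [Finset.card_le_one] at h1
  exact h1 x (by simpa using h) y (by simp)

theorem statement2 (p t n : ℕ) (hp : p.Prime) (ht : 1 ≤ t) (hn : 2 < n)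
    (K : Type*) [Field K] [Fintype K] (hK : Nat.card K = (p ^ t) ^ n)
    (Fq : Subfield K) (hFq : Nat.card Fq = p ^ t)
    (c : K) (hc : p = 2 → c ≠ 1)
    (u : K) (hu : u ≠ 0)
    (F : K → K) (hF : IsPcN c F)
    (f : K → Fq) :
    cDU c (fun x => F x + u * (f x : K)) ≤ (p ^ t) ^ 2 ∧
      (c ∈ Fq → cDU c (fun x => F x + u * (f x : K)) ≤ p ^ t) := by
  constructor
  · refine Finset.sup_le ?_
    rintro ⟨a, b⟩ hab
    have ha : c = 1 → a ≠ 0 := by simpa using hab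
    have hcard : (Finset.univ : Finset (Fq × Fq)).card = (p ^ t) ^ 2 := by
      rw [Finset.card_univ, ← Nat.card_eq_fintype_card, Nat.card_prod, hFq, sq]
    rw [← hcard]
    refine Finset.card_le_card_of_injOn (fun x => (f (x + a), f x)) (by simp) ?_
    intro x hx y hy hxy
    simp only [Finset.coe_filter, Finset.mem_univ, true_and, Set.mem_setOf_eq] at hx hy
    simp only [Prod.mk.injEq] at hxy
    obtain ⟨h1, h2⟩ := hxy
    rw [h1, h2] at hx
    apply pcn_inj hF ha
    linear_combination hx - hy
  · intro hcq
    refine Finset.sup_le ?_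
    rintro ⟨a, b⟩ hab
    have ha : c = 1 → a ≠ 0 := by simpa using hab
    have hcard : (Finset.univ : Finset Fq).card = p ^ t := by
      rw [Finset.card_univ, ← Nat.card_eq_fintype_card, hFq]
    rw [← hcard]
    refine Finset.card_le_card_of_injOn (fun x => f (x + a) - ⟨c, hcq⟩ * f x) (by simp) ?_
    intro x hx y hy hxy
    simp only [Finset.coe_filter, Finset.mem_univ, true_and, Set.mem_setOf_eq] at hx hy
    have h1 : (f (x + a) : K) - c * f x = f (y + a) - c * f y := by
      simpa using congrArg (fun z : Fq => (z : K)) hxy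
    apply pcn_inj hF ha
    linear_combination hx - hy - u * h1
end

section
/- Let q = p^t be a prime power, n > 2, c ∈ GF(q), F : GF(q^n) → GF(q^n) a PcN function with respect to c, and u, v ∈ GF(q^n) such that Tr_n(−u·v) ≠ 1. Then the function H(x) = F(x) + u·Tr_n(v·F(x)) is PcN with respect to c. -/
open scoped Classical

theorem cDU_comp_aux {K : Type*} [Field K] [Fintype K] (c : K) (F H L : K → K)
    (hL : Function.Bijective L)
    (hH : ∀ x y, H x - c * H y = L (F x - c * F y)) : cDU c H = cDU c F := by
  have key : ∀ a b, cDeltaCount c H a (L b) = cDeltaCount c F a b := by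
    intro a b
    unfold cDeltaCount
    congr 1
    ext x
    simp [hH, hL.1.eq_iff]
  unfold cDU
  apply le_antisymm
  · refine Finset.sup_le ?_
    rintro ⟨a, b⟩ hab
    obtain ⟨b', rfl⟩ := hL.2 b
    simp only [key]
    exact Finset.le_sup (f := fun ab : K × K => cDeltaCount c F ab.1 ab.2) (b := (a, b'))
      (by simpa using hab)
  · refine Finset.sup_le ?_
    rintro ⟨a, b⟩ hab
    simp only [← key]
    exact Finset.le_sup (f := fun ab : K × K => cDeltaCount c H ab.1 ab.2) (b := (a, L b))
      (by simpa using hab)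

theorem statement4 (p t n : ℕ) (hp : p.Prime) (ht : 1 ≤ t) (hn : 2 < n)
    (K : Type*) [Field K] [Fintype K] (hK : Nat.card K = (p ^ t) ^ n)
    (Fq : Subfield K) (hFq : Nat.card Fq = p ^ t)
    (c : K) (hc : c ∈ Fq)
    (F : K → K) (hF : IsPcN c F)
    (u v : K)
    (htr : (∑ i ∈ Finset.range n, (-(u * v)) ^ (p ^ t) ^ i) ≠ 1) :
    IsPcN c (fun x => F x + u * ∑ i ∈ Finset.range n, (v * F x) ^ (p ^ t) ^ i) := by
  have : Fact p.Prime := ⟨hp⟩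
  have : CharP K p := by
    apply charP_of_card_eq_prime_pow (f := t * n)
    rw [pow_mul, ← hK]
    simp
  have hcq : c ^ (p ^ t) = c := by
    have h := FiniteField.pow_card (K := Fq) ⟨c, hc⟩
    rw [← Nat.card_eq_fintype_card, hFq] at h
    simpa using congrArg Subtype.val h
  have hKq : ∀ x : K, x ^ (p ^ t) ^ n = x := by
    intro x
    rw [← hK, Nat.card_eq_fintype_card]
    exact FiniteField.pow_card x
  have hit : ∀ s : K, s ^ (p ^ t) = s → ∀ i, s ^ (p ^ t) ^ i = s := by
    intro s hs i
    induction i with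
    | zero => simp
    | succ i ih => rw [pow_succ, pow_mul, ih, hs]
  obtain ⟨T, hT⟩ : ∃ T : K → K, ∀ x, T x = ∑ i ∈ Finset.range n, x ^ (p ^ t) ^ i :=
    ⟨_, fun _ => rfl⟩
  simp only [← hT] at htr ⊢
  have hsub : ∀ x y, T (x - y) = T x - T y := by
    intro x y
    simp only [hT, ← Finset.sum_sub_distrib, ← pow_mul]
    exact Finset.sum_congr rfl fun i _ => by
      first
        | exact sub_pow_char_pow x y
        | exact sub_pow_char_pow _ _ _
        | exact sub_pow_expChar_pow _ _ _ _
  have hsmul : ∀ s : K, s ^ (p ^ t) = s → ∀ x, T (s * x) = s * T x := by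
    intro s hs x
    simp only [hT, Finset.mul_sum]
    exact Finset.sum_congr rfl fun i _ => by rw [mul_pow, hit s hs]
  have hTq : ∀ x, T x ^ (p ^ t) = T x := by
    intro x
    rw [hT, sum_pow_char_pow]
    have h1 := Finset.sum_range_succ (fun i => x ^ (p ^ t) ^ i) n
    rw [Finset.sum_range_succ'] at h1
    simp only [hKq, pow_zero, pow_one] at h1
    refine Eq.trans (Finset.sum_congr rfl fun i _ => ?_) (add_right_cancel h1)
    rw [pow_succ (p ^ t) i, pow_mul]
  unfold IsPcN at hF ⊢
  rw [← hF]
  apply cDU_comp_aux c F _ (fun y => y + u * T (v * y))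
  · refine Finite.injective_iff_bijective.mp ?_
    intro x y hxy
    simp only at hxy
    have h0 : x - y = T (v * (x - y)) * (-u) := by
      rw [mul_sub, hsub]
      linear_combination hxy
    have h1 : T (v * (x - y)) = T (v * (x - y)) * T (-(u * v)) := by
      rw [← hsmul _ (hTq _)]
      congr 1
      linear_combination v * h0
    have h2 : T (v * (x - y)) = 0 := by
      by_contra hne
      exact htr (mul_left_cancel₀ hne (by rw [← h1, mul_one]))
    rw [h2, zero_mul] at h0
    exact sub_eq_zero.mp h0
  · intro x y
    have : v * (F x - c * F y) = v * F x - c * (v * F y) := by ring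
    simp only [this, hsub, hsmul c hcq]
    ring
end

section
/- Let q = p^t be a prime power, n > 2, and let L₁, L₂ : GF(q^n) → GF(q^n) be bijective linearized polynomials with coefficients in GF(q), i.e., L_i(x) = Σ_{j=0}^{n−1} a_{ij} x^{q^j} with all a_{ij} ∈ GF(q), each inducing a bijection of GF(q^n). Let γ ∈ GF(q^n) be nonzero with Tr_n(γ) = 0. Then the function H(x) = L₁(x) + L₁(γ)·Tr_n(L₂(x)) is PcN with respect to every c ∈ GF(q^n) \ {1}. -/
open scoped Classical

theorem statement5 (p t n : ℕ) (hp : p.Prime) (ht : 1 ≤ t) (hn : 2 < n)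
    (K : Type*) [Field K] [Fintype K] (hK : Nat.card K = (p ^ t) ^ n)
    (Fq : Subfield K) (hFq : Nat.card Fq = p ^ t)
    (a₁ a₂ : Fin n → Fq) (L₁ L₂ : K → K)
    (hL₁ : ∀ x, L₁ x = ∑ j : Fin n, (a₁ j : K) * x ^ (p ^ t) ^ (j : ℕ))
    (hL₂ : ∀ x, L₂ x = ∑ j : Fin n, (a₂ j : K) * x ^ (p ^ t) ^ (j : ℕ))
    (hb₁ : Function.Bijective L₁) (hb₂ : Function.Bijective L₂)
    (γ : K) (hγ : γ ≠ 0) (hγtr : ∑ i ∈ Finset.range n, γ ^ (p ^ t) ^ i = 0)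
    (c : K) (hc : c ≠ 1) :
    IsPcN c (fun x => L₁ x + L₁ γ * ∑ i ∈ Finset.range n, (L₂ x) ^ (p ^ t) ^ i) := by
  have hpK : ((p : ℕ) : K) = 0 := by
    have h := Nat.cast_card_eq_zero K
    rw [← Nat.card_eq_fintype_card, hK] at h
    push_cast at h
    exact eq_zero_of_pow_eq_zero (eq_zero_of_pow_eq_zero h)
  haveI : Fact p.Prime := ⟨hp⟩
  haveI : CharP K p := by
    obtain ⟨r, hr⟩ := CharP.exists K
    have hd : r ∣ p := (CharP.cast_eq_zero_iff K r p).1 hpK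
    rcases (Nat.dvd_prime hp).1 hd with h | h
    · subst h
      exact absurd rfl (CharP.char_ne_one K 1)
    · subst h; exact hr
  have hadd : ∀ (i : ℕ) (x y : K),
      (x + y) ^ (p ^ t) ^ i = x ^ (p ^ t) ^ i + y ^ (p ^ t) ^ i := by
    intro i x y
    rw [← pow_mul]
    exact add_pow_char_pow x y _ _
  have hq0 : p ^ t ≠ 0 := pow_ne_zero _ hp.ne_zero
  have hfixF : ∀ u : Fq, (u : K) ^ p ^ t = u := by
    intro u
    haveI : Fintype Fq := Fintype.ofFinite _
    have h := FiniteField.pow_card u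
    rw [← Nat.card_eq_fintype_card, hFq] at h
    exact_mod_cast congrArg (Subtype.val) h
  have hfix : ∀ (u : K), u ^ p ^ t = u → ∀ i : ℕ, u ^ (p ^ t) ^ i = u := by
    intro u hu i
    induction i with
    | zero => simp
    | succ i ih => rw [pow_succ, pow_mul, ih, hu]
  have hcardK : ∀ x : K, x ^ (p ^ t) ^ n = x := by
    intro x
    rw [← hK, Nat.card_eq_fintype_card]
    exact FiniteField.pow_card x
  obtain ⟨T, hT⟩ : ∃ T : K → K, ∀ x, T x = ∑ i ∈ Finset.range n, x ^ (p ^ t) ^ i :=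
    ⟨_, fun _ => rfl⟩
  have hTadd : ∀ x y, T (x + y) = T x + T y := by
    intro x y
    simp only [hT, hadd, Finset.sum_add_distrib]
  have hTmul : ∀ u x : K, u ^ p ^ t = u → T (u * x) = u * T x := by
    intro u x hu
    simp only [hT, mul_pow, hfix u hu, Finset.mul_sum]
  have hTq : ∀ x, T (x ^ p ^ t) = T x := by
    intro x
    have h1 := Finset.sum_range_succ (fun i => x ^ (p ^ t) ^ i) n
    have h2 := Finset.sum_range_succ' (fun i => x ^ (p ^ t) ^ i) n
    rw [h1] at h2
    simp only [hcardK, pow_zero, pow_one] at h2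
    rw [hT, hT, add_right_cancel h2]
    exact Finset.sum_congr rfl fun i _ => by rw [← pow_mul, pow_succ']
  have hTqj : ∀ (j : ℕ) x, T (x ^ (p ^ t) ^ j) = T x := by
    intro j
    induction j with
    | zero => simp
    | succ j ih => intro x; rw [pow_succ, pow_mul, hTq, ih]
  let φ : K →+* K := iterateFrobenius K p t
  have hφ : ∀ x, φ x = x ^ p ^ t := fun x => iterateFrobenius_def ..
  have hTfix : ∀ x, (T x) ^ p ^ t = T x := by
    intro x
    conv_rhs => rw [← hTq x]
    rw [← hφ, hT, hT, map_sum]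
    refine Finset.sum_congr rfl fun i _ => ?_
    exact (hφ _).trans (pow_right_comm x _ _)
  have hT0 : T 0 = 0 := by simpa using hTadd 0 0
  have hTL : ∀ x, T (L₂ x) = (∑ j : Fin n, (a₂ j : K)) * T x := by
    intro x
    let Th : K →+ K := ⟨⟨T, hT0⟩, hTadd⟩
    have : T (L₂ x) = ∑ j : Fin n, T ((a₂ j : K) * x ^ (p ^ t) ^ (j : ℕ)) := by
      rw [hL₂]
      exact map_sum Th _ _
    rw [this, Finset.sum_mul]
    exact Finset.sum_congr rfl fun j _ => by rw [hTmul _ _ (hfixF _), hTqj]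
  have hL₁add : ∀ x y, L₁ (x + y) = L₁ x + L₁ y := by
    intro x y
    simp only [hL₁, hadd, mul_add, Finset.sum_add_distrib]
  have hL₁mul : ∀ u x : K, u ^ p ^ t = u → L₁ (u * x) = u * L₁ x := by
    intro u x hu
    simp only [hL₁, mul_pow, hfix u hu, Finset.mul_sum]
    exact Finset.sum_congr rfl fun j _ => by ring
  have hγT : T γ = 0 := by rw [hT, hγtr]
  simp only [← hT]
  obtain ⟨H, hH⟩ : ∃ H : K → K, ∀ x, H x = L₁ x + L₁ γ * T (L₂ x) := ⟨_, fun _ => rfl⟩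
  simp only [← hH]
  have hH' : ∀ x, H x = L₁ (x + T (L₂ x) * γ) := by
    intro x
    rw [hH, hL₁add, hL₁mul _ _ (hTfix _)]
    ring
  have hHadd : ∀ x y, H (x + y) = H x + H y := by
    intro x y
    rw [hH, hH, hH, hL₁add, hTL, hTL, hTL, hTadd]
    ring
  have hHinj : Function.Injective H := by
    intro x y hxy
    rw [hH', hH'] at hxy
    have h := hb₁.1 hxy
    have h2 : T x = T y := by
      have h3 := congrArg T h
      rw [hTadd, hTadd, hTmul _ _ (hTfix _), hTmul _ _ (hTfix _), hγT] at h3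
      simpa using h3
    rw [hTL, hTL, h2] at h
    exact add_right_cancel h
  have hc' : 1 - c ≠ 0 := sub_ne_zero.2 (Ne.symm hc)
  have key : ∀ a x, H (x + a) - c * H x = (1 - c) * H x + H a := by
    intro a x
    rw [hHadd]
    ring
  unfold IsPcN cDU
  apply le_antisymm
  · refine Finset.sup_le fun ab _ => ?_
    unfold cDeltaCount
    rw [Finset.card_le_one]
    intro x hx y hy
    simp only [Finset.mem_filter, Finset.mem_univ, true_and, key] at hx hy
    exact hHinj (mul_left_cancel₀ hc' (add_right_cancel (hx.trans hy.symm)))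
  · refine le_trans ?_ (Finset.le_sup (f := fun ab : K × K => cDeltaCount c H ab.1 ab.2)
      (b := ((0 : K), H (0 + 0) - c * H 0)) (by simp [hc]))
    unfold cDeltaCount
    exact Finset.card_pos.2 ⟨0, by simp⟩
end

section
/- Let q = p^t be a prime power, n > 2, δ ≥ 1 an integer, u ∈ GF(q^n) nonzero, c ∈ GF(q^n) (with c ≠ 1 if p = 2), F : GF(q^n) → GF(q^n) a function with c-differential uniformity _cΔ_F ≤ δ, f : GF(q^n) → GF(q), and H(x) = F(x) + u·f(x). For a, ε ∈ GF(q^n) let A_{a,ε} = {x ∈ GF(q^n) : f(x+a) − c·f(x) = ε}. Then _cΔ_H > δ if and only if there exist a ∈ GF(q^n) and pairwise distinct elements x₁, …, x_{δ+1} ∈ GF(q^n), not all lying in one common set A_{a,ε}, such that for all i ≠ j one has (F(x_i+a) − c·F(x_i)) − (F(x_j+a) − c·F(x_j)) = −u·((f(x_i+a) − c·f(x_i)) − (f(x_j+a) − c·f(x_j))). (Note that each difference (f(x_i+a) − c·f(x_i)) − (f(x_j+a) − c·f(x_j)) automatically belongs to the set {α − c·β : α, β ∈ GF(q)}.) -/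
open scoped Classical

theorem lt_cDU_iff {K : Type*} [Field K] [Fintype K] (c : K) (G : K → K) (δ : ℕ) :
    δ < cDU c G ↔ ∃ a b : K, (c = 1 → a ≠ 0) ∧ ∃ x : Fin (δ + 1) → K,
      Function.Injective x ∧ ∀ i, G (x i + a) - c * G (x i) = b := by
  unfold cDU
  rw [Finset.lt_sup_iff]
  constructor
  · rintro ⟨⟨a, b⟩, hab, h⟩
    refine ⟨a, b, by simpa using hab, ?_⟩
    unfold cDeltaCount at h
    obtain ⟨s, hs, hcard⟩ := Finset.exists_subset_card_eq (Nat.succ_le_of_lt h)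
    refine ⟨fun i => (s.equivFinOfCardEq hcard).symm i, ?_, ?_⟩
    · intro i j hij
      exact (s.equivFinOfCardEq hcard).symm.injective (Subtype.ext hij)
    · intro i
      have := hs ((s.equivFinOfCardEq hcard).symm i).2
      simpa using this
  · rintro ⟨a, b, hab, x, hx, h⟩
    refine ⟨(a, b), by simpa using hab, ?_⟩
    unfold cDeltaCount
    have h1 : (Finset.univ.image x).card = δ + 1 := by
      rw [Finset.card_image_of_injective _ hx]; simp
    have h2 : Finset.univ.image x ⊆
        Finset.univ.filter fun y => G (y + a) - c * G y = b := by
      intro y hy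
      obtain ⟨i, -, rfl⟩ := Finset.mem_image.1 hy
      simpa using h i
    have := Finset.card_le_card h2
    simp only
    omega

theorem statement6 (p t n : ℕ) (hp : p.Prime) (ht : 1 ≤ t) (hn : 2 < n)
    (K : Type*) [Field K] [Fintype K] (hK : Nat.card K = (p ^ t) ^ n)
    (Fq : Subfield K) (hFq : Nat.card Fq = p ^ t)
    (δ : ℕ) (hδ : 1 ≤ δ)
    (u : K) (hu : u ≠ 0)
    (c : K) (hc : p = 2 → c ≠ 1)
    (F : K → K) (hF : cDU c F ≤ δ)
    (f : K → Fq) :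
    δ < cDU c (fun x => F x + u * (f x : K)) ↔
      ∃ (a : K) (x : Fin (δ + 1) → K), Function.Injective x ∧
        (¬ ∃ ε : K, ∀ i, (f (x i + a) : K) - c * (f (x i) : K) = ε) ∧
        (∀ i j, i ≠ j →
          (F (x i + a) - c * F (x i)) - (F (x j + a) - c * F (x j)) =
            -(u * (((f (x i + a) : K) - c * (f (x i) : K)) -
                ((f (x j + a) : K) - c * (f (x j) : K))))) := by
  rw [lt_cDU_iff]
  constructor
  · rintro ⟨a, b, hab, x, hx, h⟩
    refine ⟨a, x, hx, ?_, ?_⟩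
    · rintro ⟨ε, hε⟩
      refine absurd ((lt_cDU_iff c F δ).2 ⟨a, b - u * ε, hab, x, hx, fun i => ?_⟩) (not_lt.2 hF)
      have h1 := h i
      have h2 := hε i
      linear_combination h1 - u * h2
    · intro i j _
      have h1 := h i
      have h2 := h j
      linear_combination h1 - h2
  · rintro ⟨a, x, hx, hne, h⟩
    refine ⟨a, (F (x 0 + a) + u * (f (x 0 + a) : K)) - c * (F (x 0) + u * (f (x 0) : K)),
      ?_, x, hx, fun i => ?_⟩
    · rintro rfl rfl
      exact hne ⟨0, fun i => by simp⟩
    · by_cases hi : i = 0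
      · subst hi; rfl
      · have h1 := h i 0 hi
        linear_combination h1
end

section
/- Let q = p^t be a prime power, n > 2, δ ≥ 1 an integer, k ≥ 1, u_1, …, u_k ∈ GF(q^n) nonzero, c ∈ GF(q^n) (with c ≠ 1 if p = 2), F : GF(q^n) → GF(q^n) a function with c-differential uniformity _cΔ_F ≤ δ, f_1, …, f_k : GF(q^n) → GF(q), and H(x) = F(x) + Σ_{t=1}^k u_t·f_t(x). Then _cΔ_H > δ if and only if there exist a ∈ GF(q^n) and pairwise distinct elements x₁, …, x_{δ+1} ∈ GF(q^n) such that the k-tuples (f_1(x_i+a) − c·f_1(x_i), …, f_k(x_i+a) − c·f_k(x_i)), i = 1, …, δ+1, are not all equal, and for all i ≠ j one has (F(x_i+a) − c·F(x_i)) − (F(x_j+a) − c·F(x_j)) = −Σ_{t=1}^k u_t·((f_t(x_i+a) − c·f_t(x_i)) − (f_t(x_j+a) − c·f_t(x_j))). -/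
open scoped Classical

theorem cDU_lt_iff_aux {K : Type*} [Field K] [Fintype K] (c : K) (F : K → K) (δ : ℕ) :
    δ < cDU c F ↔ ∃ (a : K) (x : Fin (δ + 1) → K), (c = 1 → a ≠ 0) ∧ Function.Injective x ∧
      ∀ i j, F (x i + a) - c * F (x i) = F (x j + a) - c * F (x j) := by
  unfold cDU
  rw [Finset.lt_sup_iff]
  constructor
  · rintro ⟨⟨a, b⟩, hab, h⟩
    simp only [Finset.mem_filter, Finset.mem_univ, true_and] at hab
    unfold cDeltaCount at h
    obtain ⟨s, hs, hcard⟩ := Finset.exists_subset_card_eq (Nat.succ_le_of_lt h)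
    let e := s.equivFinOfCardEq hcard
    refine ⟨a, fun i => (e.symm i : K), hab, ?_, ?_⟩
    · exact Subtype.val_injective.comp e.symm.injective
    · intro i j
      have hi := hs (e.symm i).2
      have hj := hs (e.symm j).2
      simp only [Finset.mem_filter, Finset.mem_univ, true_and] at hi hj
      exact hi.trans hj.symm
  · rintro ⟨a, x, ha, hx, h⟩
    refine ⟨(a, F (x 0 + a) - c * F (x 0)), by simpa using ha, ?_⟩
    unfold cDeltaCount
    have h1 : (Finset.univ.image x).card = δ + 1 := by
      rw [Finset.card_image_of_injective _ hx]; simp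
    have h2 : Finset.univ.image x ⊆ Finset.univ.filter
        fun y => F (y + a) - c * F y = F (x 0 + a) - c * F (x 0) := by
      intro y hy
      obtain ⟨i, -, rfl⟩ := Finset.mem_image.1 hy
      simpa using h i 0
    have h3 := Finset.card_le_card h2
    rw [h1] at h3
    exact h3

theorem statement7 (p t n : ℕ) (hp : p.Prime) (ht : 1 ≤ t) (hn : 2 < n)
    (K : Type*) [Field K] [Fintype K] (hK : Nat.card K = (p ^ t) ^ n)
    (Fq : Subfield K) (hFq : Nat.card Fq = p ^ t)
    (δ : ℕ) (hδ : 1 ≤ δ)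
    (k : ℕ) (hk : 1 ≤ k)
    (u : Fin k → K) (hu : ∀ i, u i ≠ 0)
    (c : K) (hc : p = 2 → c ≠ 1)
    (F : K → K) (hF : cDU c F ≤ δ)
    (f : Fin k → K → Fq) :
    δ < cDU c (fun x => F x + ∑ i, u i * (f i x : K)) ↔
      ∃ (a : K) (x : Fin (δ + 1) → K), Function.Injective x ∧
        (¬ ∀ (i j : Fin (δ + 1)) (s : Fin k),
            (f s (x i + a) : K) - c * (f s (x i) : K) =
              (f s (x j + a) : K) - c * (f s (x j) : K)) ∧
        (∀ i j, i ≠ j →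
          (F (x i + a) - c * F (x i)) - (F (x j + a) - c * F (x j)) =
            -(∑ s, u s * (((f s (x i + a) : K) - c * (f s (x i) : K)) -
                ((f s (x j + a) : K) - c * (f s (x j) : K))))) := by
  have key : ∀ a y z : K,
      ((fun x => F x + ∑ i, u i * (f i x : K)) (y + a)
          - c * (fun x => F x + ∑ i, u i * (f i x : K)) y
        = (fun x => F x + ∑ i, u i * (f i x : K)) (z + a)
          - c * (fun x => F x + ∑ i, u i * (f i x : K)) z) ↔
      (F (y + a) - c * F y) - (F (z + a) - c * F z) =
            -(∑ s, u s * (((f s (y + a) : K) - c * (f s y : K)) -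
                ((f s (z + a) : K) - c * (f s z : K)))) := by
    intro a y z
    have e : ∑ s, u s * (((f s (y + a) : K) - c * (f s y : K)) -
                ((f s (z + a) : K) - c * (f s z : K))) =
        (∑ s, u s * (f s (y + a) : K) - c * ∑ s, u s * (f s y : K)) -
        (∑ s, u s * (f s (z + a) : K) - c * ∑ s, u s * (f s z : K)) := by
      simp only [Finset.mul_sum, ← Finset.sum_sub_distrib]
      refine Finset.sum_congr rfl fun s _ => ?_
      ring
    rw [e]
    constructor <;> intro h <;> linear_combination h
  rw [cDU_lt_iff_aux]
  constructor
  · rintro ⟨a, x, ha, hx, h⟩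
    refine ⟨a, x, hx, ?_, fun i j _ => (key a _ _).1 (h i j)⟩
    intro hall
    apply absurd hF
    rw [not_le, cDU_lt_iff_aux]
    refine ⟨a, x, ha, hx, fun i j => ?_⟩
    have := (key a _ _).1 (h i j)
    simp only [hall i j, sub_self, mul_zero, Finset.sum_const_zero, neg_zero] at this
    exact sub_eq_zero.1 this
  · rintro ⟨a, x, hx, hne, h⟩
    refine ⟨a, x, ?_, hx, fun i j => ?_⟩
    · rintro rfl rfl
      exact hne (by simp)
    · by_cases hij : i = j
      · rw [hij]
      · exact (key a _ _).2 (h i j hij)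
end

section
/- Let q = p^t be a prime power, n > 2, u ∈ GF(q^n) nonzero, F : GF(q^n) → GF(q^n) a bijective GF(q)-linear map (a linearized permutation polynomial), f : GF(q^n) → GF(q), and H(x) = F(x) + u·f(x). (i) If c ∈ GF(q^n) \ GF(q) and for some a, b ∈ GF(q^n) the equation H(z+a) − c·H(z) = b has exactly q² − 1 solutions, then for every γ ∈ GF(q) with γ ≠ 0 there exist two distinct solutions x, y of this equation with (1−c)·F(x−y) = u·(c−1)·γ. (ii) If c ∈ GF(q) \ {1}, q ≥ 3, and for some a, b ∈ GF(q^n) the equation H(z+a) − c·H(z) = b has exactly q − 1 solutions, then for every γ ∈ GF(q) with γ ≠ 0 there exist two distinct solutions x, y with (1−c)·F(x−y) = u·(c−1)·γ. -/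
open scoped Classical

theorem shift_aux {K : Type*} [Field K] (Sol T : Finset K) (F : K → K)
    (hF : Function.Injective F) (v : K) (h1 : ∀ z ∈ Sol, F z ∈ T)
    (h2 : ∀ w ∈ T, w + v ∈ T) (hc : T.card < 2 * Sol.card) :
    ∃ x ∈ Sol, ∃ y ∈ Sol, F x = F y + v := by
  by_contra hcon
  push Not at hcon
  have hd : Disjoint (Sol.image F) (Sol.image fun z => F z + v) := by
    rw [Finset.disjoint_left]
    intro w hw hw2
    obtain ⟨x, hx, rfl⟩ := Finset.mem_image.1 hw
    obtain ⟨y, hy, h⟩ := Finset.mem_image.1 hw2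
    exact hcon x hx y hy h.symm
  have hs : (Sol.image F) ∪ (Sol.image fun z => F z + v) ⊆ T := by
    intro w hw
    rcases Finset.mem_union.1 hw with hw | hw
    · obtain ⟨x, hx, rfl⟩ := Finset.mem_image.1 hw
      exact h1 x hx
    · obtain ⟨x, hx, rfl⟩ := Finset.mem_image.1 hw
      exact h2 _ (h1 x hx)
  have := Finset.card_le_card hs
  rw [Finset.card_union_of_disjoint hd, Finset.card_image_of_injective _ hF,
    Finset.card_image_of_injective _ (fun x y h => hF (add_right_cancel h))] at this
  omega

theorem statement9 (p t n : ℕ) (hp : p.Prime) (ht : 1 ≤ t) (hn : 2 < n)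
    (K : Type*) [Field K] [Fintype K] (hK : Nat.card K = (p ^ t) ^ n)
    (Fq : Subfield K) (hFq : Nat.card Fq = p ^ t)
    (u : K) (hu : u ≠ 0)
    (F : K → K) (hFbij : Function.Bijective F)
    (hFadd : ∀ x y, F (x + y) = F x + F y)
    (hFsmul : ∀ s : K, s ∈ Fq → ∀ x : K, F (s * x) = s * F x)
    (f : K → Fq) :
    -- part (i): c ∉ GF(q)
    ((∀ c : K, c ∉ Fq → ∀ a b : K,
      (Finset.univ.filter fun z =>
          (F (z + a) + u * (f (z + a) : K)) - c * (F z + u * (f z : K)) = b).card =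
        (p ^ t) ^ 2 - 1 →
      ∀ γ : K, γ ∈ Fq → γ ≠ 0 →
        ∃ x y : K, x ≠ y ∧
          (F (x + a) + u * (f (x + a) : K)) - c * (F x + u * (f x : K)) = b ∧
          (F (y + a) + u * (f (y + a) : K)) - c * (F y + u * (f y : K)) = b ∧
          (1 - c) * F (x - y) = u * (c - 1) * γ)) ∧
    -- part (ii): c ∈ GF(q) \ {1}, q ≥ 3
    ((∀ c : K, c ∈ Fq → c ≠ 1 → 3 ≤ p ^ t → ∀ a b : K,
      (Finset.univ.filter fun z =>
          (F (z + a) + u * (f (z + a) : K)) - c * (F z + u * (f z : K)) = b).card =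
        p ^ t - 1 →
      ∀ γ : K, γ ∈ Fq → γ ≠ 0 →
        ∃ x y : K, x ≠ y ∧
          (F (x + a) + u * (f (x + a) : K)) - c * (F x + u * (f x : K)) = b ∧
          (F (y + a) + u * (f (y + a) : K)) - c * (F y + u * (f y : K)) = b ∧
          (1 - c) * F (x - y) = u * (c - 1) * γ)) := by
  have hcard : Fintype.card Fq = p ^ t := by rw [← Nat.card_eq_fintype_card, hFq]
  have hq2 : 2 ≤ p ^ t := hp.two_le.trans (Nat.le_self_pow (by omega) p)
  have hsub : ∀ x y v, F x = F y + v → F (x - y) = v := by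
    intro x y v h
    have := hFadd (x - y) y
    rw [sub_add_cancel, h] at this
    linear_combination -this
  have h0 : F 0 = 0 := by simpa using hFadd 0 0
  constructor
  · intro c hc a b hS γ hγ hγ0
    have hc1 : 1 - c ≠ 0 := fun h => hc (by rw [← sub_eq_zero.1 h]; exact Fq.one_mem)
    obtain ⟨x, hx, y, hy, hxy⟩ := shift_aux
      (T := Finset.univ.image fun s : Fq × Fq =>
        (b - F a - u * (s.1 : K) + c * u * (s.2 : K)) / (1 - c)) (F := F) (hF := hFbij.1) (v := -(u * γ))
      (Sol := Finset.univ.filter fun z =>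
          (F (z + a) + u * (f (z + a) : K)) - c * (F z + u * (f z : K)) = b)
      (by
        intro z hz
        have hz := (Finset.mem_filter.1 hz).2
        rw [hFadd] at hz
        refine Finset.mem_image.2 ⟨(f (z + a), f z), Finset.mem_univ _, ?_⟩
        rw [div_eq_iff hc1]
        linear_combination -hz)
      (by
        intro w hw
        obtain ⟨s, -, rfl⟩ := Finset.mem_image.1 hw
        refine Finset.mem_image.2 ⟨(s.1 + ⟨γ, hγ⟩, s.2 + ⟨γ, hγ⟩), Finset.mem_univ _, ?_⟩
        push_cast
        field_simp
        ring)
      (by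
        refine lt_of_le_of_lt Finset.card_image_le ?_
        rw [hS, Finset.card_univ, Fintype.card_prod, hcard]
        have : 4 ≤ (p ^ t) ^ 2 := by nlinarith
        have h3 : (p ^ t) ^ 2 = p ^ t * p ^ t := sq _
        omega)
    have hF := hsub _ _ _ hxy
    refine ⟨x, y, ?_, (Finset.mem_filter.1 hx).2, (Finset.mem_filter.1 hy).2, ?_⟩
    · rintro rfl
      rw [sub_self, h0] at hF
      exact mul_ne_zero hu hγ0 (neg_eq_zero.1 hF.symm)
    · rw [hF]; ring
  · intro c hc hc1' hq3 a b hS γ hγ hγ0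
    have hc1 : 1 - c ≠ 0 := fun h => hc1' (sub_eq_zero.1 h).symm
    obtain ⟨x, hx, y, hy, hxy⟩ := shift_aux
      (T := Finset.univ.image fun s : Fq =>
        (b - F a - u * (s : K)) / (1 - c)) (F := F) (hF := hFbij.1) (v := -(u * γ))
      (Sol := Finset.univ.filter fun z =>
          (F (z + a) + u * (f (z + a) : K)) - c * (F z + u * (f z : K)) = b)
      (by
        intro z hz
        have hz := (Finset.mem_filter.1 hz).2
        rw [hFadd] at hz
        refine Finset.mem_image.2 ⟨f (z + a) - ⟨c, hc⟩ * f z, Finset.mem_univ _, ?_⟩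
        rw [div_eq_iff hc1]
        push_cast
        linear_combination -hz)
      (by
        intro w hw
        obtain ⟨s, -, rfl⟩ := Finset.mem_image.1 hw
        refine Finset.mem_image.2 ⟨s + (1 - ⟨c, hc⟩) * ⟨γ, hγ⟩, Finset.mem_univ _, ?_⟩
        push_cast
        field_simp
        ring)
      (by
        refine lt_of_le_of_lt Finset.card_image_le ?_
        rw [hS, Finset.card_univ, hcard]
        omega)
    have hF := hsub _ _ _ hxy
    refine ⟨x, y, ?_, (Finset.mem_filter.1 hx).2, (Finset.mem_filter.1 hy).2, ?_⟩
    · rintro rfl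
      rw [sub_self, h0] at hF
      exact mul_ne_zero hu hγ0 (neg_eq_zero.1 hF.symm)
    · rw [hF]; ring
end

section
/- Let p be a prime, ℓ ≥ 2, q = p^ℓ, and n = m·p for some integer m ≥ 1 (so p divides n). Let u ∈ GF(q) be nonzero and let L : GF(q^n) → GF(q^n) be a bijective GF(q)-linear map (a q-linearized permutation polynomial) that maps the subfield GF(q) bijectively onto GF(q). Then the function H₀(x) = L(x) + u·Tr_n(x) on GF(q^n) is PcN with respect to every c ∈ GF(q^n) \ {1}. -/
open scoped Classical

theorem statement10 (p ℓ m n : ℕ) (hp : p.Prime) (hℓ : 2 ≤ ℓ) (hm : 1 ≤ m)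
    (hn : n = m * p)
    (K : Type*) [Field K] [Fintype K] (hK : Nat.card K = (p ^ ℓ) ^ n)
    (Fq : Subfield K) (hFq : Nat.card Fq = p ^ ℓ)
    (u : K) (huF : u ∈ Fq) (hu : u ≠ 0)
    (L : K → K) (hLbij : Function.Bijective L)
    (hLadd : ∀ x y, L (x + y) = L x + L y)
    (hLsmul : ∀ s : K, s ∈ Fq → ∀ x : K, L (s * x) = s * L x)
    (hLsub : Set.BijOn L (Fq : Set K) (Fq : Set K))
    (c : K) (hc : c ≠ 1) :
    IsPcN c (fun x => L x + u * ∑ i ∈ Finset.range n, x ^ (p ^ ℓ) ^ i) := by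
  have hq1 : 1 < p ^ ℓ := Nat.one_lt_pow (by omega) hp.one_lt
  haveI : Fact p.Prime := ⟨hp⟩
  have hcardF : Fintype.card Fq = p ^ ℓ := by rw [← Nat.card_eq_fintype_card, hFq]
  have hcardK : Fintype.card K = p ^ (ℓ * n) := by
    rw [← Nat.card_eq_fintype_card, hK, pow_mul]
  haveI : CharP K p := charP_of_card_eq_prime_pow hcardK
  have hfin : Module.finrank Fq K = n := by
    have h := Module.card_eq_pow_finrank (K := Fq) (V := K)
    rw [hcardF, hcardK, pow_mul] at h
    exact (Nat.pow_right_injective hq1 h).symm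
  have hT : ∀ x : K, ∑ i ∈ Finset.range n, x ^ (p ^ ℓ) ^ i
      = ((Algebra.trace Fq K x : Fq) : K) := by
    intro x
    have h := FiniteField.algebraMap_trace_eq_sum_pow Fq K x
    rw [hfin, hFq] at h
    exact h.symm
  have hn0 : (n : K) = 0 := by
    rw [hn]; push_cast; simp
  have hL0 : L 0 = 0 := by
    have h := hLadd 0 0
    simpa using h
  simp only [hT]
  set H : K → K := fun x => L x + u * ((Algebra.trace Fq K x : Fq) : K) with hH
  have hHadd : ∀ x y, H (x + y) = H x + H y := by
    intro x y
    simp only [hH, hLadd, map_add, Subfield.coe_add]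
    ring
  have hker : ∀ x, H x = 0 → x = 0 := by
    intro x hx
    have hx' : L x = -(u * ((Algebra.trace Fq K x : Fq) : K)) := eq_neg_of_add_eq_zero_left hx
    have hmem : L x ∈ (Fq : Set K) := by
      rw [hx']
      exact Fq.neg_mem (Fq.mul_mem huF (Subtype.property _))
    obtain ⟨y, hy, hyx⟩ := hLsub.surjOn hmem
    have hxF : x ∈ Fq := by
      rw [← hLbij.injective hyx]; exact hy
    have ht : ((Algebra.trace Fq K x : Fq) : K) = 0 := by
      have h := Algebra.trace_algebraMap (S := K) (⟨x, hxF⟩ : Fq)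
      have h2 : algebraMap Fq K ⟨x, hxF⟩ = x := rfl
      rw [h2, hfin] at h
      rw [h, nsmul_eq_mul]
      push_cast
      rw [hn0, zero_mul]
    rw [ht, mul_zero, neg_zero, ← hL0] at hx'
    exact hLbij.injective hx'
  have hHinj : Function.Injective H := by
    intro x y hxy
    have h := hHadd (x - y) y
    rw [sub_add_cancel, hxy] at h
    exact sub_eq_zero.mp (hker _ (by simpa using h))
  have hc' : (1 : K) - c ≠ 0 := sub_ne_zero.mpr (Ne.symm hc)
  have hsurj := Finite.surjective_of_injective hHinj
  have hcount : ∀ a b, cDeltaCount c H a b = 1 := by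
    intro a b
    obtain ⟨x, hx⟩ := hsurj ((b - H a) / (1 - c))
    unfold cDeltaCount
    rw [Finset.card_eq_one]
    refine ⟨x, ?_⟩
    ext y
    simp only [Finset.mem_filter, Finset.mem_univ, true_and, Finset.mem_singleton]
    rw [← hHinj.eq_iff (a := y), hx, eq_div_iff hc', hHadd]
    constructor <;> intro h <;> linear_combination h
  unfold IsPcN cDU
  simp only [hcount]
  apply Finset.sup_const
  exact ⟨(0, 0), by simp [hc]⟩
end

section
/- Let n ≥ 4 be an even integer, let L : GF(2^n) → GF(2^n) be a bijective F₂-linear map (a 2-linearized permutation polynomial) with L(1) = 1, and let k be an integer with 1 ≤ k ≤ n−1. Define H_k : GF(2^n) → GF(2^n) by H_k(x) = L(x) + Tr_n(x^{2^k+1}), where Tr_n : GF(2^n) → GF(2) is the absolute trace and its value is viewed in GF(2^n). Then H_k is a permutation of GF(2^n) (i.e., PcN for c = 0), and for every c ∈ GF(2^n) \ {1} the c-differential uniformity of H_k is at most 2 (i.e., H_k is either APcN or PcN with respect to c). -/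
open scoped Classical

theorem aux_trace {n : ℕ} {K : Type*} [Field K] [Fintype K] [CharP K 2] (hne : Even n)
    (hK : Fintype.card K = 2 ^ n) (k : ℕ) (T : K → K)
    (hT : T = fun x => ∑ i ∈ Finset.range n, (x ^ (2 ^ k + 1)) ^ 2 ^ i) :
    (∀ x, T x = 0 ∨ T x = 1) ∧ ∀ x, T (x + 1) = T x := by
  set S : K → K := fun z => ∑ i ∈ Finset.range n, z ^ 2 ^ i with hS
  have hTS : ∀ x, T x = S (x ^ (2 ^ k + 1)) := fun x => by rw [hT]
  have hadd : ∀ x y, S (x + y) = S x + S y := by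
    intro x y
    simp only [hS]
    rw [← Finset.sum_add_distrib]
    exact Finset.sum_congr rfl fun i _ => add_pow_char_pow x y 2 i
  have hsq : ∀ z, S z ^ 2 = S (z ^ 2) := by
    intro z
    simp only [hS]
    rw [sum_pow_char 2]
    exact Finset.sum_congr rfl fun i _ => by rw [← pow_mul, ← pow_mul, mul_comm]
  have hinv : ∀ z, S (z ^ 2) = S z := by
    intro z
    have h1 := Finset.sum_range_succ (fun i => z ^ 2 ^ i) n
    have h2 := Finset.sum_range_succ' (fun i => z ^ 2 ^ i) n
    have h3 : z ^ 2 ^ n = z := by rw [← hK]; exact FiniteField.pow_card z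
    rw [h1, h3, pow_zero, pow_one] at h2
    have h4 := add_right_cancel h2
    simp only [hS]
    rw [h4]
    exact Finset.sum_congr rfl fun i _ => by rw [← pow_mul, pow_succ']
  have hinvk : ∀ (j : ℕ) z, S (z ^ 2 ^ j) = S z := by
    intro j z
    induction j with
    | zero => simp
    | succ j ih => rw [pow_succ, pow_mul, hinv, ih]
  have hone : S 1 = 0 := by
    simp only [hS, one_pow, Finset.sum_const, Finset.card_range, nsmul_eq_mul, mul_one]
    exact (CharP.cast_eq_zero_iff K 2 n).2 hne.two_dvd
  refine ⟨fun x => ?_, fun x => ?_⟩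
  · rw [hTS]
    have h := (hsq (x ^ (2 ^ k + 1))).trans (hinv _)
    set s := S (x ^ (2 ^ k + 1))
    have : s * (s - 1) = 0 := by linear_combination h
    rcases mul_eq_zero.1 this with h | h
    · exact Or.inl h
    · exact Or.inr (sub_eq_zero.1 h)
  · rw [hTS, hTS]
    have : (x + 1) ^ (2 ^ k + 1) = x ^ (2 ^ k + 1) + (x ^ 2 ^ k + (x + 1)) := by
      rw [pow_succ, add_pow_char_pow, one_pow]; ring
    rw [this, hadd, hadd, hadd, hinvk, hone, add_zero, CharTwo.add_self_eq_zero, add_zero]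

theorem statement11 (n : ℕ) (hn : 4 ≤ n) (hne : Even n)
    (K : Type*) [Field K] [Fintype K] (hK : Nat.card K = 2 ^ n)
    (L : K → K) (hLbij : Function.Bijective L)
    (hLadd : ∀ x y, L (x + y) = L x + L y) (hL1 : L 1 = 1)
    (k : ℕ) (hk : 1 ≤ k) (hk' : k ≤ n - 1) :
    IsPcN (0 : K)
        (fun x => L x + ∑ i ∈ Finset.range n, (x ^ (2 ^ k + 1)) ^ 2 ^ i) ∧
      ∀ c : K, c ≠ 1 →
        cDU c (fun x => L x + ∑ i ∈ Finset.range n, (x ^ (2 ^ k + 1)) ^ 2 ^ i) ≤ 2 := by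
  have hcard : Fintype.card K = 2 ^ n := by rw [← Nat.card_eq_fintype_card]; exact hK
  have : CharP K 2 := charP_of_card_eq_prime_pow (f := n) hcard
  obtain ⟨T, hT⟩ : ∃ T : K → K,
      T = fun x => ∑ i ∈ Finset.range n, (x ^ (2 ^ k + 1)) ^ 2 ^ i := ⟨_, rfl⟩
  obtain ⟨h01, hT1⟩ := aux_trace hne hcard k T hT
  have hF : (fun x => L x + ∑ i ∈ Finset.range n, (x ^ (2 ^ k + 1)) ^ 2 ^ i)
      = fun x => L x + T x := by rw [hT]
  rw [hF]
  have two : (2 : K) = 0 := CharTwo.two_eq_zero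
  have key : ∀ x y t, (t = 0 ∨ t = 1) → L x = L y + t → T x = T y := by
    rintro x y t (rfl | rfl) h
    · rw [add_zero] at h
      rw [hLbij.1 h]
    · rw [← hL1, ← hLadd] at h
      rw [hLbij.1 h, hT1]
  have hdiff : ∀ x y, T x + T y = 0 ∨ T x + T y = 1 := by
    intro x y
    rcases h01 x with h | h <;> rcases h01 y with h' | h' <;> rw [h, h']
    · left; ring
    · right; ring
    · right; ring
    · left; linear_combination two
  have hinj : Function.Injective fun x => L x + T x := by
    intro x y h
    simp only at h
    have h1 := key x y (T x + T y) (hdiff x y) (by linear_combination h - T x * two)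
    rw [h1] at h
    exact hLbij.1 (add_right_cancel h)
  refine ⟨?_, fun c hc => ?_⟩
  · refine le_antisymm ?_ ?_
    · refine Finset.sup_le fun ab _ => ?_
      refine Finset.card_le_one.2 fun x hx y hy => ?_
      simp only [Finset.mem_filter, Finset.mem_univ, true_and, zero_mul, sub_zero] at hx hy
      exact add_right_cancel (hinj (hx.trans hy.symm))
    · refine le_trans ?_ (Finset.le_sup (b := ((0 : K), L 0 + T 0)) (by simp))
      refine Finset.card_pos.2 ⟨0, ?_⟩
      simp
  · refine Finset.sup_le fun ab _ => ?_
    obtain ⟨a, b⟩ := ab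
    have hle : ({0, 1} : Finset K).card ≤ 2 := Finset.card_le_two
    refine le_trans (Finset.card_le_card_of_injOn (fun x => T (x + a) + T x) ?_ ?_) hle
    · intro x _
      simpa using hdiff (x + a) x
    · intro x hx y hy h
      simp only [Finset.coe_filter, Finset.mem_univ, true_and, Set.mem_ofPred_eq, hLadd] at hx hy h
      have hc' : (1 - c) ≠ 0 := sub_ne_zero.2 (Ne.symm hc)
      have e : L x = L y + (T x + T y) := by
        apply mul_left_cancel₀ hc'
        linear_combination hx - hy - h + (T x * c - T y) * two
      have h1 := key x y _ (hdiff x y) e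
      rw [h1, CharTwo.add_self_eq_zero, add_zero] at e
      exact hLbij.1 e
end

section
/- Let n ≥ 4 be an even integer, let L : GF(2^n) → GF(2^n) be a bijective F₂-linear map (a 2-linearized permutation polynomial) with L(1) = 1, let s ≥ 1, let 1 ≤ k₁ < k₂ < … < k_s ≤ n−1 be integers, let g₁, …, g_s ≥ 1 be integers, and let δ₁, …, δ_s ∈ GF(2^n). Define H : GF(2^n) → GF(2^n) by H(x) = L(x) + Π_{i=1}^{s} (Tr_n(x^{2^{k_i}+1} + δ_i))^{g_i}, where Tr_n : GF(2^n) → GF(2) is the absolute trace and the product (an element of GF(2)) is viewed in GF(2^n). Then H is a permutation of GF(2^n) (i.e., PcN for c = 0), and for every c ∈ GF(2^n) \ {1} the c-differential uniformity of H is at most 2 (i.e., H is either APcN or PcN with respect to c). -/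
open scoped Classical

section aux
variable {K : Type*} [Field K] [Fintype K]

theorem aux_count [CharP K 2] (L P : K → K) (hLbij : Function.Bijective L)
    (hLadd : ∀ x y, L (x + y) = L x + L y) (hL1 : L 1 = 1)
    (hP : ∀ x, P x = 0 ∨ P x = 1) (hP1 : ∀ x, P (x + 1) = P x) :
    Function.Injective (fun x => L x + P x) ∧
    ∀ c : K, c ≠ 1 → cDU c (fun x => L x + P x) ≤ 2 := by
  have h2 : (2 : K) = 0 := CharTwo.two_eq_zero
  have one : ∀ x y, L x = L y + 1 → x = y + 1 := by
    intro x y h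
    apply hLbij.1
    rw [hLadd, hL1, h]
  constructor
  · intro x y h
    simp only at h
    by_cases hp : P x = P y
    · rw [hp] at h
      exact hLbij.1 (add_right_cancel h)
    · exfalso
      have : x = y + 1 := by
        apply one
        rcases hP x with h1 | h1 <;> rcases hP y with h3 | h3 <;> simp only [h1, h3] at h hp <;> grind
      exact hp (by rw [this, hP1])
  · intro c hc
    unfold cDU
    apply Finset.sup_le
    rintro ⟨a, b⟩ -
    unfold cDeltaCount
    by_contra! hcon
    have hc' : 1 - c ≠ 0 := sub_ne_zero.mpr hc.symm
    obtain ⟨x, hx, y, hy, z, hz, hxy, hxz, hyz⟩ := Finset.two_lt_card.mp hcon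
    simp only [Finset.mem_filter, Finset.mem_univ, true_and, hLadd] at hx hy hz
    have key : ∀ x y, x ≠ y → L x + L a + P (x + a) - c * (L x + P x) = b →
        L y + L a + P (y + a) - c * (L y + P y) = b →
        (P x = P y ∧ P (x + a) ≠ P (y + a)) ∨ (P x ≠ P y ∧ P (x + a) = P (y + a)) := by
      intro x y hxy hx hy
      by_cases h1 : P x = P y <;> by_cases h3 : P (x + a) = P (y + a)
      · exfalso
        apply hxy
        apply hLbij.1
        apply mul_left_cancel₀ hc'
        rw [h1, h3] at hx
        linear_combination hx - hy
      · exact Or.inl ⟨h1, h3⟩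
      · exact Or.inr ⟨h1, h3⟩
      · exfalso
        apply h1
        have : x = y + 1 := by
          apply one
          apply mul_left_cancel₀ hc'
          have e1 : P x = P y + 1 := by
            rcases hP x with h1 | h1 <;> rcases hP y with h3 | h3 <;> grind
          have e2 : P (x + a) = P (y + a) + 1 := by
            rcases hP (x + a) with h1 | h1 <;> rcases hP (y + a) with h3 | h3 <;> grind
          rw [e1, e2] at hx
          linear_combination hx - hy - (1 - c) * h2
        rw [this, hP1]
    have k1 := key x y hxy hx hy
    have k2 := key x z hxz hx hz
    have k3 := key y z hyz hy hz
    have p1 := hP x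
    have p2 := hP y
    have p3 := hP z
    have p4 := hP (x + a)
    have p5 := hP (y + a)
    have p6 := hP (z + a)
    clear hx hy hz hxy hxz hyz hcon key one hP hP1 hLadd
    grind

theorem aux_pcn (F : K → K) (h : Function.Injective F) : IsPcN (0 : K) F := by
  unfold IsPcN cDU
  apply le_antisymm
  · apply Finset.sup_le
    rintro ⟨a, b⟩ -
    unfold cDeltaCount
    apply Finset.card_le_one.mpr
    intro x hx y hy
    simp only [Finset.mem_filter, Finset.mem_univ, true_and, zero_mul, sub_zero] at hx hy
    exact add_right_cancel (h (hx.trans hy.symm))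
  · have hm : ((0 : K), F 0) ∈ (Finset.univ.filter fun ab : K × K => (0 : K) = 1 → ab.1 ≠ 0) := by
      simp
    refine le_trans ?_ (Finset.le_sup (f := fun ab : K × K => cDeltaCount 0 F ab.1 ab.2) hm)
    unfold cDeltaCount
    apply Finset.card_pos.mpr
    exact ⟨0, by simp⟩

theorem aux_tr_sq [CharP K 2] (n : ℕ) (hK : Fintype.card K = 2 ^ n) (z : K) :
    ∑ j ∈ Finset.range n, (z ^ 2) ^ 2 ^ j = ∑ j ∈ Finset.range n, z ^ 2 ^ j := by
  have h1 := Finset.sum_range_succ (fun j => z ^ 2 ^ j) n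
  have h3 := Finset.sum_range_succ' (fun j => z ^ 2 ^ j) n
  have h4 : z ^ 2 ^ n = z := by rw [← hK]; exact FiniteField.pow_card z
  have h5 : ∑ j ∈ Finset.range n, (z ^ 2) ^ 2 ^ j = ∑ j ∈ Finset.range n, z ^ 2 ^ (j + 1) := by
    apply Finset.sum_congr rfl
    intro j _
    rw [← pow_mul, pow_succ' 2 j]
  rw [h5]
  simp only [h4, pow_zero, pow_one] at h1 h3
  exact add_right_cancel (h3.symm.trans h1)

theorem aux_tr_add [CharP K 2] (n : ℕ) (y z : K) :
    ∑ j ∈ Finset.range n, (y + z) ^ 2 ^ j =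
      ∑ j ∈ Finset.range n, y ^ 2 ^ j + ∑ j ∈ Finset.range n, z ^ 2 ^ j := by
  rw [← Finset.sum_add_distrib]
  exact Finset.sum_congr rfl fun j _ => add_pow_char_pow y z 2 j

theorem aux_tr_pow [CharP K 2] (n : ℕ) (hK : Fintype.card K = 2 ^ n) (z : K) (k : ℕ) :
    ∑ j ∈ Finset.range n, (z ^ 2 ^ k) ^ 2 ^ j = ∑ j ∈ Finset.range n, z ^ 2 ^ j := by
  induction k with
  | zero => simp
  | succ k ih => rw [pow_succ 2 k, pow_mul, aux_tr_sq n hK, ih]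

theorem aux_tr_idem [CharP K 2] (n : ℕ) (hK : Fintype.card K = 2 ^ n) (z : K) :
    (∑ j ∈ Finset.range n, z ^ 2 ^ j) ^ 2 = ∑ j ∈ Finset.range n, z ^ 2 ^ j := by
  rw [sum_pow_char 2]
  rw [← aux_tr_sq n hK z]
  exact Finset.sum_congr rfl fun j _ => pow_right_comm _ _ _

end aux

theorem statement12 (n : ℕ) (hn : 4 ≤ n) (hne : Even n)
    (K : Type*) [Field K] [Fintype K] (hK : Nat.card K = 2 ^ n)
    (L : K → K) (hLbij : Function.Bijective L)
    (hLadd : ∀ x y, L (x + y) = L x + L y) (hL1 : L 1 = 1)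
    (s : ℕ) (hs : 1 ≤ s)
    (k : Fin s → ℕ) (hkmono : StrictMono k)
    (hk : ∀ i, 1 ≤ k i ∧ k i ≤ n - 1)
    (g : Fin s → ℕ) (hg : ∀ i, 1 ≤ g i)
    (δ : Fin s → K) :
    IsPcN (0 : K)
        (fun x => L x + ∏ i : Fin s,
          (∑ j ∈ Finset.range n, (x ^ (2 ^ k i + 1) + δ i) ^ 2 ^ j) ^ g i) ∧
      ∀ c : K, c ≠ 1 →
        cDU c (fun x => L x + ∏ i : Fin s,
          (∑ j ∈ Finset.range n, (x ^ (2 ^ k i + 1) + δ i) ^ 2 ^ j) ^ g i) ≤ 2 := by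
  have hK' : Fintype.card K = 2 ^ n := by rw [← Nat.card_eq_fintype_card, hK]
  haveI : Fact (Nat.Prime 2) := ⟨Nat.prime_two⟩
  haveI : CharP K 2 := charP_of_card_eq_prime_pow hK'
  have h2 : (2 : K) = 0 := CharTwo.two_eq_zero
  have main := aux_count L (fun x => ∏ i : Fin s,
          (∑ j ∈ Finset.range n, (x ^ (2 ^ k i + 1) + δ i) ^ 2 ^ j) ^ g i) hLbij hLadd hL1 ?_ ?_
  · exact ⟨aux_pcn _ main.1, main.2⟩
  · intro x
    have : (∏ i : Fin s,
          (∑ j ∈ Finset.range n, (x ^ (2 ^ k i + 1) + δ i) ^ 2 ^ j) ^ g i) ^ 2 = ∏ i : Fin s,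
          (∑ j ∈ Finset.range n, (x ^ (2 ^ k i + 1) + δ i) ^ 2 ^ j) ^ g i := by
      rw [← Finset.prod_pow]
      refine Finset.prod_congr rfl fun i _ => ?_
      rw [pow_right_comm, aux_tr_idem n hK']
    rw [sq] at this
    exact IsIdempotentElem.iff_eq_zero_or_one.mp this
  · intro x
    refine Finset.prod_congr rfl fun i _ => ?_
    congr 1
    have e : (x + 1) ^ (2 ^ k i + 1) + δ i = (x ^ (2 ^ k i + 1) + δ i) + (x ^ 2 ^ k i + (x + 1)) := by
      rw [pow_succ (x + 1), add_pow_char_pow x 1]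
      ring
    have h1 : ∑ j ∈ Finset.range n, (1 : K) ^ 2 ^ j = 0 := by
      obtain ⟨m, rfl⟩ := hne
      simp only [one_pow, Finset.sum_const, Finset.card_range, nsmul_eq_mul, mul_one]
      push_cast
      exact CharTwo.add_self_eq_zero _
    rw [e, aux_tr_add, aux_tr_add n (x ^ 2 ^ k i), aux_tr_add n x, aux_tr_pow n hK', h1, add_zero,
      CharTwo.add_self_eq_zero, add_zero]
end

section
/- Let p be a prime, and let m, n be positive integers with m dividing n and p dividing n/m. Let t ≥ 1 be an integer, u ∈ GF(p^m) nonzero, δ₁, …, δ_t ∈ GF(p^m), and k₁, …, k_t, s₁, …, s_t integers with 1 ≤ k_i, s_i ≤ p^n − 1. Let L : GF(p^n) → GF(p^n) be a bijective F_p-linear map (a linearized permutation polynomial) that maps the subfield GF(p^m) bijectively onto GF(p^m). Then the function H(x) = L(x) + u·Σ_{i=1}^{t} (Tr_{p^n/p^m}(x)^{k_i} + δ_i)^{s_i} on GF(p^n) is PcN with respect to every c ∈ GF(p^m) \ {1}. -/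
open scoped Classical

theorem statement13 (p m n : ℕ) (hp : p.Prime) (hm : 0 < m) (hmn : m ∣ n)
    (hpn : p ∣ n / m)
    (K : Type*) [Field K] [Fintype K] (hK : Nat.card K = p ^ n)
    (Fpm : Subfield K) (hFpm : Nat.card Fpm = p ^ m)
    (t : ℕ) (ht : 1 ≤ t)
    (u : K) (huF : u ∈ Fpm) (hu : u ≠ 0)
    (δ : Fin t → K) (hδ : ∀ i, δ i ∈ Fpm)
    (k s : Fin t → ℕ)
    (hk : ∀ i, 1 ≤ k i ∧ k i ≤ p ^ n - 1)
    (hs : ∀ i, 1 ≤ s i ∧ s i ≤ p ^ n - 1)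
    (L : K → K) (hLbij : Function.Bijective L)
    (hLadd : ∀ x y, L (x + y) = L x + L y)
    (hLsub : Set.BijOn L (Fpm : Set K) (Fpm : Set K))
    (c : K) (hc : c ∈ Fpm) (hc1 : c ≠ 1) :
    IsPcN c (fun x => L x + u * ∑ i : Fin t,
      ((∑ j ∈ Finset.range (n / m), x ^ (p ^ m) ^ j) ^ k i + δ i) ^ s i) := by
  have hp1 : 1 < p := hp.one_lt
  -- characteristic
  have hn : 0 < n := by
    rcases Nat.eq_zero_or_pos n with h | h
    · subst h
      have := Finite.one_lt_card (α := K)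
      rw [hK] at this; simp at this
    · exact h
  have hp0 : (p : K) = 0 := by
    have h1 : ((Nat.card K : ℕ) : K) = 0 := by
      rw [Nat.card_eq_fintype_card]; exact Nat.cast_card_eq_zero K
    rw [hK, Nat.cast_pow] at h1
    exact pow_eq_zero_iff (by omega) |>.1 h1
  have hr : Module.finrank Fpm K = n / m := by
    have h := Module.natCard_eq_pow_finrank (K := Fpm) (V := K)
    rw [hK, hFpm, ← pow_mul] at h
    have h2 := Nat.pow_right_injective hp.two_le h
    rw [h2, Nat.mul_div_cancel_left _ hm]
  have hT : ∀ x : K, ∑ j ∈ Finset.range (n / m), x ^ (p ^ m) ^ j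
      = algebraMap Fpm K (Algebra.trace Fpm K x) := by
    intro x
    rw [FiniteField.algebraMap_trace_eq_sum_pow, hr, hFpm]
  simp only [hT]
  set g : Fpm → K := fun z => u * ∑ i : Fin t, ((algebraMap Fpm K z) ^ k i + δ i) ^ s i with hg
  have hgF : ∀ z, g z ∈ Fpm := by
    intro z
    refine Fpm.mul_mem huF (Fpm.sum_mem fun i _ => Fpm.pow_mem (Fpm.add_mem (Fpm.pow_mem z.2 _) (hδ i)) _)
  change IsPcN c (fun x => L x + g (Algebra.trace Fpm K x))
  have hL0 : L 0 = 0 := by simpa using hLadd 0 0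
  have hc' : 1 - c ≠ 0 := sub_ne_zero.2 hc1.symm
  have hinj : ∀ a x y : K,
      (L (x + a) + g (Algebra.trace Fpm K (x + a))) - c * (L x + g (Algebra.trace Fpm K x))
      = (L (y + a) + g (Algebra.trace Fpm K (y + a))) - c * (L y + g (Algebra.trace Fpm K y)) →
      x = y := by
    intro a x y h
    have hxy : L x = L (x - y) + L y := by rw [← hLadd]; simp
    have key : (1 - c) * L (x - y) = (g (Algebra.trace Fpm K (y + a)) - c * g (Algebra.trace Fpm K y))
        - (g (Algebra.trace Fpm K (x + a)) - c * g (Algebra.trace Fpm K x)) := by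
      rw [hLadd, hLadd, hxy] at h
      linear_combination h
    have hmem : L (x - y) ∈ Fpm := by
      have h1 : (1 - c) * L (x - y) ∈ Fpm := by
        rw [key]
        exact Fpm.sub_mem (Fpm.sub_mem (hgF _) (Fpm.mul_mem hc (hgF _)))
          (Fpm.sub_mem (hgF _) (Fpm.mul_mem hc (hgF _)))
      have h2 : L (x - y) = (1 - c)⁻¹ * ((1 - c) * L (x - y)) := by
        rw [inv_mul_cancel_left₀ hc']
      rw [h2]
      exact Fpm.mul_mem (Fpm.inv_mem (Fpm.sub_mem Fpm.one_mem hc)) h1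
    obtain ⟨w, hw, hwe⟩ := hLsub.surjOn hmem
    have hwxy : w = x - y := hLbij.1 hwe
    have htr : Algebra.trace Fpm K (x - y) = 0 := by
      have h1 := Algebra.trace_algebraMap (R := Fpm) (S := K) ⟨w, hw⟩
      have h2 : algebraMap Fpm K ⟨w, hw⟩ = x - y := hwxy
      rw [h2, hr] at h1
      rw [h1]
      obtain ⟨d, hd⟩ := hpn
      apply Subtype.ext
      simp [hd, hp0]
    have htr1 : Algebra.trace Fpm K x = Algebra.trace Fpm K y := by
      rw [map_sub] at htr; exact sub_eq_zero.1 htr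
    rw [map_add, map_add, htr1, sub_self] at key
    have h0 : L (x - y) = 0 := (mul_eq_zero.1 key).resolve_left hc'
    exact sub_eq_zero.1 (hLbij.1 (h0.trans hL0.symm))
  unfold IsPcN cDU
  apply le_antisymm
  · refine Finset.sup_le fun ab _ => ?_
    refine Finset.card_le_one.2 fun x hx y hy => ?_
    simp only [Finset.mem_filter, Finset.mem_univ, true_and] at hx hy
    exact hinj ab.1 x y (hx.trans hy.symm)
  · set F : K → K := fun x => L x + g (Algebra.trace Fpm K x)
    refine le_trans ?_ (Finset.le_sup (f := fun ab : K × K => cDeltaCount c F ab.1 ab.2)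
      (b := ((0 : K), F (0 + 0) - c * F 0)) (by simp [hc1]))
    refine Finset.card_pos.2 ⟨0, ?_⟩
    simp
end

section
/- (Dillon's switching method.) Let F : GF(2^n) → GF(2^n) be an APN function, u ∈ GF(2^n) nonzero, f : GF(2^n) → GF(2) a Boolean function (its values viewed in GF(2^n)), and H(x) = F(x) + u·f(x). Then H is APN if and only if, for all a ∈ GF(2^n) with a ≠ 0 and all x, y ∈ GF(2^n), the equality F(x+a) + F(x) + F(y+a) + F(y) = u implies f(x+a) + f(x) + f(y+a) + f(y) = 0. -/
open scoped Classical

/-- The number of solutions `x` of `F(x+a) + F(x) = b` (characteristic 2). -/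
noncomputable def deltaCount2 {K : Type*} [Field K] [Fintype K]
    (F : K → K) (a b : K) : ℕ :=
  (Finset.univ.filter fun x => F (x + a) + F x = b).card

/-- The differential uniformity of `F` (characteristic 2): the maximum of
`deltaCount2 F a b` over all `a ≠ 0` and all `b`. -/
noncomputable def DU2 {K : Type*} [Field K] [Fintype K] (F : K → K) : ℕ :=
  (Finset.univ.filter fun ab : K × K => ab.1 ≠ 0).sup
    fun ab => deltaCount2 F ab.1 ab.2

/-- `F` is almost perfect nonlinear. -/
def IsAPN {K : Type*} [Field K] [Fintype K] (F : K → K) : Prop :=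
  DU2 F = 2

theorem isAPN_iff_aux {K : Type*} [Field K] [Fintype K] [CharP K 2] (F : K → K) :
    IsAPN F ↔ ∀ a : K, a ≠ 0 → ∀ x y : K,
      F (x + a) + F x + F (y + a) + F y = 0 → y = x ∨ y = x + a := by
  have h2 : ∀ z : K, z + z = 0 := CharTwo.add_self_eq_zero
  have hsw : ∀ x a : K, x + a + a = x := fun x a => by rw [add_assoc, h2, add_zero]
  unfold IsAPN DU2
  constructor
  · intro h a ha x y hxy
    by_contra hne
    push Not at hne
    obtain ⟨h1, h3⟩ := hne
    have hle : deltaCount2 F a (F (x + a) + F x) ≤ 2 := by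
      rw [← h]
      exact Finset.le_sup (f := fun ab : K × K => deltaCount2 F ab.1 ab.2)
        (b := (a, F (x + a) + F x)) (by simpa using ha)
    have hsub : ({x, x + a, y} : Finset K) ⊆
        Finset.univ.filter fun z => F (z + a) + F z = F (x + a) + F x := by
      intro z hz
      simp only [Finset.mem_insert, Finset.mem_singleton] at hz
      simp only [Finset.mem_filter, Finset.mem_univ, true_and]
      rcases hz with rfl | rfl | rfl
      · rfl
      · rw [hsw, add_comm]
      · have := CharTwo.add_eq_zero.mp (show (F (x + a) + F x) + (F (z + a) + F z) = 0 by
          rw [← hxy]; ring)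
        exact this.symm
    have hc := Finset.card_le_card hsub
    have h3c : ({x, x + a, y} : Finset K).card = 3 :=
      Finset.card_eq_three.mpr ⟨x, x + a, y, by simpa using ha, h1.symm, h3.symm, rfl⟩
    unfold deltaCount2 at hle
    omega
  · intro h
    apply le_antisymm
    · apply Finset.sup_le
      rintro ⟨a, b⟩ hab
      have ha : a ≠ 0 := by simpa using hab
      show deltaCount2 F a b ≤ 2
      unfold deltaCount2
      rcases Finset.eq_empty_or_nonempty (Finset.univ.filter fun x => F (x + a) + F x = b)
        with he | ⟨x, hx⟩
      · rw [he]; simp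
      · refine (Finset.card_le_card (t := {x, x + a}) ?_).trans Finset.card_le_two
        intro y hy
        simp only [Finset.mem_filter, Finset.mem_univ, true_and] at hx hy
        simp only [Finset.mem_insert, Finset.mem_singleton]
        apply h a ha
        rw [add_assoc, hx, hy, h2]
    · have hle : deltaCount2 F 1 (F (0 + 1) + F 0) ≤
          (Finset.univ.filter fun ab : K × K => ab.1 ≠ 0).sup
            fun ab => deltaCount2 F ab.1 ab.2 :=
        Finset.le_sup (f := fun ab : K × K => deltaCount2 F ab.1 ab.2)
          (b := (1, F (0 + 1) + F 0)) (by simp)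
      refine le_trans ?_ hle
      unfold deltaCount2
      rw [← Finset.card_pair (zero_ne_one (α := K))]
      apply Finset.card_le_card
      intro z hz
      simp only [Finset.mem_insert, Finset.mem_singleton] at hz
      simp only [Finset.mem_filter, Finset.mem_univ, true_and]
      rcases hz with rfl | rfl
      · rfl
      · rw [h2, zero_add, add_comm]

theorem statement14 (n : ℕ) (hn : 0 < n)
    (K : Type*) [Field K] [Fintype K] (hK : Nat.card K = 2 ^ n)
    (F : K → K) (hF : IsAPN F)
    (u : K) (hu : u ≠ 0)
    (f : K → K) (hf : ∀ x, f x = 0 ∨ f x = 1) :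
    IsAPN (fun x => F x + u * f x) ↔
      ∀ a : K, a ≠ 0 → ∀ x y : K,
        F (x + a) + F x + F (y + a) + F y = u →
        f (x + a) + f x + f (y + a) + f y = 0 := by
  have : Fact (Nat.Prime 2) := ⟨Nat.prime_two⟩
  have : CharP K 2 := by
    apply charP_of_card_eq_prime_pow (f := n)
    rw [← Nat.card_eq_fintype_card]; exact hK
  have h2 : ∀ z : K, z + z = 0 := CharTwo.add_self_eq_zero
  have hadd : ∀ s t : K, (s = 0 ∨ s = 1) → (t = 0 ∨ t = 1) → (s + t = 0 ∨ s + t = 1) := by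
    rintro s t (rfl | rfl) (rfl | rfl) <;> simp [h2]
  have hsum : ∀ x y a : K, f (x + a) + f x + f (y + a) + f y = 0 ∨
      f (x + a) + f x + f (y + a) + f y = 1 := fun x y a =>
    hadd _ _ (hadd _ _ (hadd _ _ (hf _) (hf _)) (hf _)) (hf _)
  have hsw : ∀ x a : K, x + a + a = x := fun x a => by rw [add_assoc, h2, add_zero]
  have key : ∀ x y a : K, (F (x + a) + u * f (x + a)) + (F x + u * f x) +
      (F (y + a) + u * f (y + a)) + (F y + u * f y) =
      (F (x + a) + F x + F (y + a) + F y) + u * (f (x + a) + f x + f (y + a) + f y) := by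
    intros; ring
  rw [isAPN_iff_aux] at hF ⊢
  constructor
  · intro h a ha x y hxy
    rcases hsum x y a with h0 | h1
    · exact h0
    · exfalso
      have := h a ha x y (by rw [key, hxy, h1, mul_one, h2])
      apply hu
      rw [← hxy]
      rcases this with rfl | rfl
      · rw [add_assoc, h2]
      · rw [hsw, add_assoc, add_comm (F x), h2]
  · intro h a ha x y hxy
    rw [key] at hxy
    rcases hsum x y a with h0 | h1
    · rw [h0, mul_zero, add_zero] at hxy
      exact hF a ha x y hxy
    · rw [h1, mul_one] at hxy
      have := h a ha x y (CharTwo.add_eq_zero.mp hxy)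
      rw [h1] at this
      exact absurd this one_ne_zero
end
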